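/- Let T be finite, say T = {1,…,m} (so the parameter space C(T,ℝ) is ℝᵐ with the max norm). Then the global Hoffman constant Hof F := sup_{b ∈ dom F, x ∈ ℝⁿ} d(x,F(b))/d(b,F⁻¹(x)) satisfies Hof F = max { d_*(0ₙ, conv{a_t : t ∈ J})⁻¹ : J ⊆ T and 0ₙ ∉ conv{a_t : t ∈ J} }, where conv denotes the convex hull. -/

import Mathlib

open Filter Set EMetric
open scoped Topology ENNReal NNReal

/-- The feasible set `F(b) = {x ∈ ℝⁿ : aₜ'x ≤ bₜ, t = 1,…,m}` of a finite linear
inequality system. -/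
def feas {n m : ℕ} (a : Fin m → (Fin n → ℝ)) (b : Fin m → ℝ) : Set (Fin n → ℝ) :=
  {x | ∀ t : Fin m, (∑ i, a t i * x i) ≤ b t}

/-- Distance (in `[0,+∞]`, with `d(z,∅) = +∞`) from `z` to `S ⊆ ℝⁿ` with respect to the
norm `p` on `ℝⁿ`. -/
noncomputable def pDist {n : ℕ} (p : Seminorm ℝ (Fin n → ℝ))
    (z : Fin n → ℝ) (S : Set (Fin n → ℝ)) : ℝ≥0∞ :=
  ⨅ s ∈ S, ENNReal.ofReal (p (z - s))

/-- The dual norm `‖u‖_* = sup_{p(x) ≤ 1} |u'x|` of `u ∈ ℝⁿ`, valued in `[0,+∞]`. -/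
noncomputable def dualNorm {n : ℕ} (p : Seminorm ℝ (Fin n → ℝ)) (u : Fin n → ℝ) : ℝ≥0∞ :=
  ⨆ (x : Fin n → ℝ) (_ : p x ≤ 1), ENNReal.ofReal |∑ i, u i * x i|

/-- The dual distance `d_*(0ₙ, S) = inf_{u ∈ S} ‖u‖_*`, valued in `[0,+∞]` (`= +∞` if `S = ∅`). -/
noncomputable def dualDist0 {n : ℕ} (p : Seminorm ℝ (Fin n → ℝ)) (S : Set (Fin n → ℝ)) : ℝ≥0∞ :=
  ⨅ u ∈ S, dualNorm p u


/-!
Let `r = d(x, F(b)) > 0` for the norm `p`. Hahn–Banach produces a functional `g ≤ p` with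
`g ≤ g x - r` on `F(b)`, and Farkas' lemma writes `g` as a nonnegative combination `∑ wₜ aₜ`
with `r ≤ ∑ wₜ (aₜ x - bₜ)`. Subtracting nonnegative relations among the `aₜ` shrinks the support
`J` of `w` until `0 ∉ conv {aₜ : t ∈ J}`. The residuals `aₜ x - bₜ` are at most `d(b, F⁻¹(x))`, so
`r ≤ (∑ wₜ) d(b, F⁻¹(x))`, while `g / ∑ wₜ ∈ conv {aₜ : t ∈ J}` has dual norm at most `1 / ∑ wₜ`.
Conversely, if `0 ∉ conv {aₜ : t ∈ J}`, the system `aₜ z ≤ -1` for `t ∈ J`, with slack inequalities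
for `t ∉ J`, has quotient at least `d_*(0, conv {aₜ : t ∈ J})⁻¹` at the origin.
-/

open Function Module

section LinearInequalities

variable {𝕜 ι E : Type*} [Field 𝕜] [LinearOrder 𝕜] [AddCommGroup E] [Module 𝕜 E]

/-- The solution set of the system of linear inequalities `a t x ≤ b t`, where the vectors `aₜ` of
the left-hand sides are encoded as linear functionals. -/
def feasibleSet (a : ι → Dual 𝕜 E) (b : ι → 𝕜) : Set E :=
  {x | ∀ t, a t x ≤ b t}

theorem exists_nonneg_sum_insert_smul_eq [DecidableEq ι] (a : ι → E) {s : Finset ι} {t₀ : ι}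
    (ht₀ : t₀ ∉ s) {c : 𝕜} (hc : 0 ≤ c) {w : ι → 𝕜} (hw : 0 ≤ w) :
    ∃ v : ι → 𝕜, 0 ≤ v ∧ ∑ t ∈ insert t₀ s, v t • a t = c • a t₀ + ∑ t ∈ s, w t • a t := by
  refine ⟨update w t₀ c, le_update_iff.2 ⟨hc, fun t _ => hw t⟩, ?_⟩
  rw [Finset.sum_insert ht₀, update_self]
  congr 1
  exact Finset.sum_congr rfl fun t ht => by rw [update_of_ne (ne_of_mem_of_not_mem ht ht₀)]

variable [IsStrictOrderedRing 𝕜]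

theorem convex_feasibleSet (a : ι → Dual 𝕜 E) (b : ι → 𝕜) : Convex 𝕜 (feasibleSet a b) := by
  simp only [feasibleSet, ofPred_forall]
  exact convex_iInter fun t => convex_halfSpace_le (a t).isLinear (b t)

theorem farkas_lemma (a : ι → Dual 𝕜 E) (s : Finset ι) (g : Dual 𝕜 E)
    (h : ∀ x, (∀ t ∈ s, a t x ≤ 0) → g x ≤ 0) :
    ∃ w : ι → 𝕜, 0 ≤ w ∧ ∑ t ∈ s, w t • a t = g := by
  classical
  induction s using Finset.induction_on generalizing a g with
  | empty =>
    refine ⟨0, le_rfl, LinearMap.ext fun x => le_antisymm ?_ (h x (by simp))⟩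
    simpa using h (-x) (by simp)
  | insert t₀ s ht₀ ih =>
    suffices ∃ c : 𝕜, 0 ≤ c ∧ ∃ w : ι → 𝕜, 0 ≤ w ∧ c • a t₀ + ∑ t ∈ s, w t • a t = g by
      obtain ⟨c, hc, w, hw, rfl⟩ := this
      exact exists_nonneg_sum_insert_smul_eq a ht₀ hc hw
    by_cases hs : ∀ x, (∀ t ∈ s, a t x ≤ 0) → g x ≤ 0
    · obtain ⟨w, hw, hwg⟩ := ih a g hs
      exact ⟨0, le_rfl, w, hw, by rw [zero_smul, zero_add, hwg]⟩
    obtain ⟨z, hz₀, hz, hgz⟩ : ∃ z, a t₀ z = 1 ∧ (∀ t ∈ s, a t z ≤ 0) ∧ 0 < g z := by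
      push Not at hs
      obtain ⟨z, hz, hgz⟩ := hs
      have hpos : 0 < a t₀ z := by
        by_contra! hle
        exact hgz.not_ge (h z ((Finset.forall_mem_insert _ _ _).2 ⟨hle, hz⟩))
      refine ⟨(a t₀ z)⁻¹ • z, by simp [hpos.ne'], fun t ht => ?_, ?_⟩
      · simpa using mul_nonpos_of_nonneg_of_nonpos (inv_pos.2 hpos).le (hz t ht)
      · simpa using mul_pos (inv_pos.2 hpos) hgz
    -- Projecting along `z` onto the kernel of `a t₀` makes the inequality `t₀` void.
    let π : E →ₗ[𝕜] E := LinearMap.id - (a t₀).smulRight z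
    have hπ (f : Dual 𝕜 E) : f ∘ₗ π = f - f z • a t₀ := by
      ext x
      simp [π, mul_comm]
    obtain ⟨w, hw, hwg⟩ := ih (fun t => a t ∘ₗ π) (g ∘ₗ π) fun x hx =>
      h (π x) ((Finset.forall_mem_insert _ _ _).2 ⟨by simp [π, hz₀], hx⟩)
    refine ⟨g z - ∑ t ∈ s, w t * a t z, ?_, w, hw, ?_⟩
    · have : ∑ t ∈ s, w t * a t z ≤ 0 :=
        Finset.sum_nonpos fun t ht => mul_nonpos_of_nonneg_of_nonpos (hw t) (hz t ht)
      linarith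
    · ext x
      have hwx : ∑ t ∈ s, w t * (a t x - a t z * a t₀ x) = g x - g z * a t₀ x := by
        simpa [hπ] using LinearMap.congr_fun hwg x
      simp only [mul_sub, ← mul_assoc, Finset.sum_sub_distrib, ← Finset.sum_mul] at hwx
      simp only [LinearMap.add_apply, LinearMap.smul_apply, LinearMap.sum_apply, smul_eq_mul]
      linear_combination hwx

/-- **Gordan's theorem**: apply Farkas' lemma to the system `a t x + s ≤ 0` and the functional
`(x, s) ↦ s`. -/
theorem exists_forall_le_neg_one_of_zero_notMem_convexHull (a : ι → Dual 𝕜 E) {J : Set ι}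
    (hJ : J.Finite) (h0 : 0 ∉ convexHull 𝕜 (a '' J)) : ∃ y, ∀ t ∈ J, a t y ≤ -1 := by
  by_contra! hy
  have hcone (v : E × 𝕜) (hv : ∀ t ∈ hJ.toFinset, (a t).coprod LinearMap.id v ≤ 0) : v.2 ≤ 0 := by
    by_contra! hpos
    obtain ⟨t, ht, hlt⟩ := hy (v.2⁻¹ • v.1)
    have hle : a t v.1 + v.2 ≤ 0 := by simpa using hv t (hJ.mem_toFinset.2 ht)
    rw [map_smul, smul_eq_mul, inv_mul_eq_div, lt_div_iff₀ hpos] at hlt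
    linarith
  obtain ⟨w, hw, hsum⟩ := farkas_lemma _ _ (LinearMap.snd 𝕜 E 𝕜) hcone
  have hw1 : ∑ t ∈ hJ.toFinset, w t = 1 := by
    simpa using LinearMap.congr_fun hsum (0, 1)
  have hwa : ∑ t ∈ hJ.toFinset, w t • a t = 0 := by
    ext x
    simpa using LinearMap.congr_fun hsum (x, 0)
  rw [← hwa] at h0
  exact h0 ((convex_convexHull 𝕜 _).sum_mem (fun t _ => hw t) hw1 fun t ht =>
    subset_convexHull 𝕜 _ (mem_image_of_mem a (hJ.mem_toFinset.1 ht)))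

theorem apply_nonpos_of_forall_feasibleSet_apply_le {a : ι → Dual 𝕜 E} {b : ι → 𝕜} {g : Dual 𝕜 E}
    {r : 𝕜} (hne : (feasibleSet a b).Nonempty) (h : ∀ x ∈ feasibleSet a b, g x ≤ r) {v : E}
    (hv : ∀ t, a t v ≤ 0) : g v ≤ 0 := by
  obtain ⟨x, hx⟩ := hne
  by_contra! hpos
  have hs : 0 ≤ (r - g x + 1) / g v := div_nonneg (by linarith [h x hx]) hpos.le
  have hray : x + ((r - g x + 1) / g v) • v ∈ feasibleSet a b := fun t => by
    rw [map_add, map_smul, smul_eq_mul]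
    linarith [hx t, mul_nonpos_of_nonneg_of_nonpos hs (hv t)]
  have := h _ hray
  rw [map_add, map_smul, smul_eq_mul, div_mul_cancel₀ _ hpos.ne'] at this
  linarith

theorem affine_farkas_lemma [Fintype ι] (a : ι → Dual 𝕜 E) (b : ι → 𝕜) (g : Dual 𝕜 E) (r : 𝕜)
    (hne : (feasibleSet a b).Nonempty) (h : ∀ x ∈ feasibleSet a b, g x ≤ r) :
    ∃ w : ι → 𝕜, 0 ≤ w ∧ ∑ t, w t • a t = g ∧ ∑ t, w t * b t ≤ r := by
  -- Homogenize: the index `none` carries the inequality `-s ≤ 0` for the extra coordinate `s`.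
  let A : Option ι → Dual 𝕜 (E × 𝕜) := fun o =>
    o.elim (-LinearMap.snd 𝕜 E 𝕜) fun t => (a t).coprod (-b t • LinearMap.id)
  have hcone (v : E × 𝕜) (hv : ∀ o ∈ Finset.univ, A o v ≤ 0) :
      g.coprod (-r • LinearMap.id) v ≤ 0 := by
    have hs : 0 ≤ v.2 := by simpa [A] using hv none
    have hA (t : ι) : a t v.1 ≤ b t * v.2 := by simpa [A] using hv (some t)
    suffices g v.1 ≤ r * v.2 by simpa
    rcases hs.eq_or_lt with hs | hs
    · simp only [← hs, mul_zero] at hA ⊢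
      exact apply_nonpos_of_forall_feasibleSet_apply_le hne h hA
    · have := h (v.2⁻¹ • v.1) fun t => by
        rw [map_smul, smul_eq_mul, inv_mul_le_iff₀' hs]
        exact hA t
      rwa [map_smul, smul_eq_mul, inv_mul_le_iff₀' hs] at this
  obtain ⟨w, hw, hsum⟩ := farkas_lemma A _ _ hcone
  refine ⟨fun t => w (some t), fun t => hw _, ?_, ?_⟩
  · ext x
    simpa [A, Fintype.sum_option] using LinearMap.congr_fun hsum (x, 0)
  · have hb : -w none - ∑ t, w (some t) * b t = -r := by
      simpa [A, Fintype.sum_option, sub_eq_add_neg] using LinearMap.congr_fun hsum (0, 1)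
    have := hw none
    simp only [Pi.zero_apply] at this
    linarith

end LinearInequalities

section ConvexCombinations

variable {𝕜 ι E : Type*} [Field 𝕜] [LinearOrder 𝕜] [IsStrictOrderedRing 𝕜]

theorem exists_sub_smul_nonneg_support_ssubset [Finite ι] {w μ : ι → 𝕜} (hw : 0 ≤ w) (hμ : 0 ≤ μ)
    (hμ0 : μ ≠ 0) (hsupp : support μ ⊆ support w) :
    ∃ s : 𝕜, 0 ≤ s ∧ 0 ≤ w - s • μ ∧ support (w - s • μ) ⊂ support w := by
  obtain ⟨t₀, ht₀, hmin⟩ := exists_min_image (support μ) (fun t => w t / μ t) (toFinite _)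
    (support_nonempty_iff.2 hμ0)
  refine ⟨w t₀ / μ t₀, div_nonneg (hw t₀) (hμ t₀), fun t => ?_, ?_⟩
  · rcases (hμ t).eq_or_lt with ht | ht
    · simpa [← ht] using hw t
    · simpa using (le_div_iff₀ ht).1 (hmin t ht.ne')
  · have hsub : support (w - (w t₀ / μ t₀) • μ) ⊆ support w :=
      (support_sub _ _).trans
        (union_subset subset_rfl ((support_const_smul_subset _ _).trans hsupp))
    refine (ssubset_iff_of_subset hsub).2 ⟨t₀, hsupp ht₀, ?_⟩
    simp [div_mul_cancel₀ _ (mem_support.1 ht₀)]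

variable [Fintype ι] [AddCommGroup E] [Module 𝕜 E]

theorem exists_mem_stdSimplex_of_mem_convexHull_image {a : ι → E} {J : Set ι} {u : E}
    (hu : u ∈ convexHull 𝕜 (a '' J)) :
    ∃ μ ∈ stdSimplex 𝕜 ι, support μ ⊆ J ∧ ∑ t, μ t • a t = u := by
  classical
  have himage : a '' J = Fintype.linearCombination 𝕜 a '' ((fun t => Pi.single t 1) '' J) := by
    simp [image_image]
  rw [himage, ← LinearMap.image_convexHull] at hu
  obtain ⟨μ, hμ, rfl⟩ := hu
  have hsub : (fun t => Pi.single t (1 : 𝕜)) '' J ⊆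
      stdSimplex 𝕜 ι ∩ {μ | ∀ t ∉ J, μ t = 0} := by
    rintro _ ⟨t, ht, rfl⟩
    exact ⟨single_mem_stdSimplex 𝕜 t,
      fun s hs => Pi.single_eq_of_ne (ne_of_mem_of_not_mem ht hs).symm _⟩
  have hconv : Convex 𝕜 (stdSimplex 𝕜 ι ∩ {μ | ∀ t ∉ J, μ t = 0}) :=
    (convex_stdSimplex 𝕜 ι).inter fun μ hμ ν hν α β _ _ _ t ht => by simp [hμ t ht, hν t ht]
  obtain ⟨hμ, hμJ⟩ := convexHull_min hsub hconv hμ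
  exact ⟨μ, hμ, support_subset_iff'.2 hμJ, rfl⟩

theorem inv_sum_smul_sum_mem_convexHull (a : ι → E) {w : ι → 𝕜} (hw : 0 ≤ w)
    (hpos : 0 < ∑ t, w t) :
    (∑ t, w t)⁻¹ • ∑ t, w t • a t ∈ convexHull 𝕜 (a '' support w) := by
  classical
  have h := Finset.centerMass_mem_convexHull (R := 𝕜) (s := a '' support w) (z := a)
    {t | w t ≠ 0} (fun t _ => hw t) (by rwa [Finset.sum_filter_ne_zero])
    (fun t ht => mem_image_of_mem a (by simpa using ht))
  rwa [Finset.centerMass_filter_ne_zero] at h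

theorem exists_nonneg_combination_zero_notMem_convexHull (a : ι → E) (c : ι → 𝕜)
    (hc : ∀ μ : ι → 𝕜, 0 ≤ μ → ∑ t, μ t • a t = 0 → ∑ t, μ t * c t ≤ 0) {w : ι → 𝕜} (hw : 0 ≤ w) :
    ∃ v : ι → 𝕜, 0 ≤ v ∧ ∑ t, v t • a t = ∑ t, w t • a t ∧ ∑ t, w t * c t ≤ ∑ t, v t * c t ∧
      0 ∉ convexHull 𝕜 (a '' support v) := by
  induction hS : support w using WellFoundedLT.induction generalizing w with
  | _ S ih =>
  subst hS
  by_cases h0 : 0 ∈ convexHull 𝕜 (a '' support w)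
  swap
  · exact ⟨w, hw, rfl, le_rfl, h0⟩
  obtain ⟨μ, ⟨hμ, hμ1⟩, hμw, hμa⟩ := exists_mem_stdSimplex_of_mem_convexHull_image h0
  have hμ0 : μ ≠ 0 := by
    rintro rfl
    simp at hμ1
  obtain ⟨s, hs, hnonneg, hssub⟩ := exists_sub_smul_nonneg_support_ssubset hw hμ hμ0 hμw
  obtain ⟨v, hv, hva, hvc, hv0⟩ := ih _ hssub hnonneg rfl
  refine ⟨v, hv, hva.trans ?_, le_trans ?_ hvc, hv0⟩
  · simp [sub_smul, mul_smul, Finset.sum_sub_distrib, ← Finset.smul_sum, hμa]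
  · simp only [Pi.sub_apply, Pi.smul_apply, smul_eq_mul, sub_mul, mul_assoc,
      Finset.sum_sub_distrib, ← Finset.mul_sum]
    linarith [mul_nonpos_of_nonneg_of_nonpos hs (hc μ hμ hμa)]

end ConvexCombinations

section Duality

variable {ι E : Type*} [AddCommGroup E] [Module ℝ E] (p : Seminorm ℝ E)

theorem le_seminorm_of_forall_lt_imp_lt {g : Dual ℝ E} {r : ℝ} (hr : 0 < r)
    (h : ∀ z, p z < r → g z < r) (z : E) : g z ≤ p z := by
  by_contra! hlt
  have hg : 0 < g z := (apply_nonneg p z).trans_lt hlt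
  have hp : p ((r / g z) • z) < r := by
    rw [map_smul_eq_mul, Real.norm_of_nonneg (div_pos hr hg).le, div_mul_eq_mul_div, div_lt_iff₀ hg]
    exact mul_lt_mul_of_pos_left hlt hr
  refine (h _ hp).ne ?_
  rw [map_smul, smul_eq_mul, div_mul_cancel₀ _ hg.ne']

theorem exists_dual_le_seminorm_of_convex {C : Set E} (hC : Convex ℝ C) (x : E) {r : ℝ}
    (hr : 0 < r) (hx : ∀ y ∈ C, r ≤ p (x - y)) :
    ∃ g : Dual ℝ E, (∀ z, g z ≤ p z) ∧ ∀ y ∈ C, g y ≤ g x - r := by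
  let _ : SeminormedAddCommGroup E := p.toAddGroupSeminorm.toSeminormedAddCommGroup
  let _ : NormedSpace ℝ E := ⟨fun c z => (map_smul_eq_mul p c z).le⟩
  have hdisj : Disjoint C (Metric.ball x r) := disjoint_left.2 fun y hy hyx =>
    (hx y hy).not_gt (by rwa [mem_ball_iff_norm'] at hyx)
  obtain ⟨f, u, hfball, hfC⟩ :=
    geometric_hahn_banach_open (convex_ball x r) Metric.isOpen_ball hC hdisj.symm
  have hux : 0 < u - f x := sub_pos.2 (hfball x (Metric.mem_ball_self hr))
  refine ⟨-(r / (u - f x)) • f.toLinearMap, ?_, fun y hy => ?_⟩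
  · refine le_seminorm_of_forall_lt_imp_lt p hr fun z hz => ?_
    have hfz : f (x - z) < u := hfball (x - z) (by rwa [mem_ball_iff_norm', sub_sub_cancel])
    have : r / (u - f x) * -f z < r / (u - f x) * (u - f x) := by
      gcongr
      rw [map_sub] at hfz
      linarith
    rw [div_mul_cancel₀ _ hux.ne'] at this
    simpa only [LinearMap.smul_apply, ContinuousLinearMap.coe_coe, smul_eq_mul, neg_mul,
      mul_neg] using this
  · have : r ≤ r / (u - f x) * (f y - f x) := by
      rw [div_mul_eq_mul_div, le_div_iff₀ hux]
      gcongr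
      exact hfC y hy
    simp only [LinearMap.smul_apply, ContinuousLinearMap.coe_coe, smul_eq_mul]
    linarith

/-- The distance, with values in `[0, ∞]`, from a point to a set with respect to a seminorm. -/
noncomputable def seminormInfEDist (x : E) (S : Set E) : ℝ≥0∞ :=
  ⨅ y ∈ S, ENNReal.ofReal (p (x - y))

/-- The dual norm of a linear functional with respect to a seminorm. It is `∞` when
the functional is not bounded by a multiple of the seminorm. -/
noncomputable def dualENorm (u : Dual ℝ E) : ℝ≥0∞ :=
  ⨆ (x : E) (_ : p x ≤ 1), ENNReal.ofReal |u x|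

/-- The distance from the zero functional to a set of functionals in the dual norm. -/
noncomputable def dualInfENorm (S : Set (Dual ℝ E)) : ℝ≥0∞ :=
  ⨅ u ∈ S, dualENorm p u

variable {p}

theorem dualENorm_le_ofReal {u : Dual ℝ E} {C : ℝ} (hC : 0 ≤ C) (h : ∀ x, u x ≤ C * p x) :
    dualENorm p u ≤ ENNReal.ofReal C := by
  refine iSup₂_le fun x hx => ENNReal.ofReal_le_ofReal (abs_le'.2 ⟨?_, ?_⟩)
  · exact (h x).trans (mul_le_of_le_one_right hC hx)
  · rw [← map_neg]
    exact (h (-x)).trans (mul_le_of_le_one_right hC (by rwa [map_neg_eq_map]))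

theorem inv_dualENorm_le_ofReal {u : Dual ℝ E} {x : E} (h : 1 ≤ |u x|) :
    (dualENorm p u)⁻¹ ≤ ENNReal.ofReal (p x) := by
  rw [ENNReal.inv_le_iff_inv_le]
  refine ENNReal.le_of_forall_nnreal_lt fun c hc => ?_
  have hcx : p (c • x) ≤ 1 := by
    have : (c : ℝ≥0∞) * ENNReal.ofReal (p x) ≤ 1 := ENNReal.le_inv_iff_mul_le.1 hc.le
    rw [← ENNReal.ofReal_coe_nnreal, ← ENNReal.ofReal_mul c.coe_nonneg,
      ENNReal.ofReal_le_one] at this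
    rwa [NNReal.smul_def, map_smul_eq_mul, Real.norm_of_nonneg c.coe_nonneg]
  refine le_trans ?_ (le_iSup₂ (f := fun y (_ : p y ≤ 1) => ENNReal.ofReal |u y|) (c • x) hcx)
  rw [NNReal.smul_def, map_smul, smul_eq_mul, abs_mul, NNReal.abs_eq, ← ENNReal.ofReal_coe_nnreal]
  exact ENNReal.ofReal_le_ofReal (le_mul_of_one_le_right c.coe_nonneg h)

variable {a : ι → Dual ℝ E}

theorem inv_dualInfENorm_le_seminormInfEDist_zero {b : ι → ℝ} {J : Set ι}
    (hb : ∀ t ∈ J, b t ≤ -1) :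
    (dualInfENorm p (convexHull ℝ (a '' J)))⁻¹ ≤ seminormInfEDist p 0 (feasibleSet a b) := by
  refine le_iInf₂ fun z hz => ?_
  have hconv : convexHull ℝ (a '' J) ⊆ {u | u z ≤ -1} := by
    refine convexHull_min ?_ (convex_halfSpace_le (LinearMap.applyₗ z).isLinear _)
    rintro _ ⟨t, ht, rfl⟩
    exact (hz t).trans (hb t ht)
  simp only [dualInfENorm, ENNReal.inv_iInf, zero_sub, map_neg_eq_map]
  exact iSup₂_le fun u hu => inv_dualENorm_le_ofReal (le_abs'.2 (Or.inl (hconv hu)))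

variable [Fintype ι]

theorem infEDist_setOf_mem_feasibleSet (a : ι → Dual ℝ E) (b : ι → ℝ) (x : E) :
    Metric.infEDist b {b' | x ∈ feasibleSet a b'} = ⨆ t, ENNReal.ofReal (a t x - b t) := by
  refine le_antisymm ?_ (iSup_le fun t => Metric.le_infEDist.2 fun b' hb' => ?_)
  · have hmem : (fun t => max (b t) (a t x)) ∈ {b' | x ∈ feasibleSet a b'} :=
      fun t => le_max_right _ _
    refine (Metric.infEDist_le_edist_of_mem hmem).trans (edist_pi_le_iff.2 fun t => ?_)
    refine le_trans (le_of_eq ?_) (le_iSup _ t)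
    rcases le_total (a t x) (b t) with hle | hle
    · rw [max_eq_left hle, edist_self, ENNReal.ofReal_of_nonpos (sub_nonpos.2 hle)]
    · rw [max_eq_right hle, edist_comm, edist_dist, Real.dist_eq, abs_of_nonneg (sub_nonneg.2 hle)]
  · refine le_trans ?_ (edist_le_pi_edist b b' t)
    rw [edist_comm, edist_dist, Real.dist_eq]
    refine ENNReal.ofReal_le_ofReal (le_trans ?_ (le_abs_self _))
    exact sub_le_sub_right (hb' t) _

theorem exists_nonneg_multipliers_of_le_seminorm {b : ι → ℝ} (hne : (feasibleSet a b).Nonempty)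
    {x : E} {r : ℝ} (hr : 0 < r) (hx : ∀ y ∈ feasibleSet a b, r ≤ p (x - y)) :
    ∃ w : ι → ℝ, 0 ≤ w ∧ (∀ z, (∑ t, w t • a t) z ≤ p z) ∧ r ≤ ∑ t, w t * (a t x - b t) := by
  obtain ⟨g, hgp, hg⟩ := exists_dual_le_seminorm_of_convex p (convex_feasibleSet a b) x hr hx
  obtain ⟨w, hw, rfl, hwb⟩ := affine_farkas_lemma a b g _ hne hg
  refine ⟨w, hw, hgp, ?_⟩
  have : (∑ t, w t • a t) x = ∑ t, w t * a t x := by simp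
  simp only [mul_sub, Finset.sum_sub_distrib]
  linarith

theorem ofReal_sum_mul_residual_le (b : ι → ℝ) (x : E) {w : ι → ℝ} (hw : 0 ≤ w) :
    ENNReal.ofReal (∑ t, w t * (a t x - b t)) ≤
      ENNReal.ofReal (∑ t, w t) * Metric.infEDist b {b' | x ∈ feasibleSet a b'} := by
  have hfin : Metric.infEDist b {b' | x ∈ feasibleSet a b'} ≠ ⊤ :=
    Metric.infEDist_ne_top ⟨fun t => a t x, fun _ => le_rfl⟩
  have hres (t : ι) : a t x - b t ≤ (Metric.infEDist b {b' | x ∈ feasibleSet a b'}).toReal := by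
    rw [← ENNReal.ofReal_le_iff_le_toReal hfin, infEDist_setOf_mem_feasibleSet]
    exact le_iSup (fun t => ENNReal.ofReal (a t x - b t)) t
  rw [← ENNReal.ofReal_toReal hfin, ← ENNReal.ofReal_mul (Finset.sum_nonneg fun t _ => hw t),
    Finset.sum_mul]
  exact ENNReal.ofReal_le_ofReal
    (Finset.sum_le_sum fun t _ => mul_le_mul_of_nonneg_left (hres t) (hw t))

theorem sum_mul_residual_nonpos {b : ι → ℝ} (hne : (feasibleSet a b).Nonempty) (x : E) {w : ι → ℝ}
    (hw : 0 ≤ w) (hwa : ∑ t, w t • a t = 0) : ∑ t, w t * (a t x - b t) ≤ 0 := by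
  obtain ⟨y, hy⟩ := hne
  have hzero (z : E) : ∑ t, w t * a t z = 0 := by simpa using LinearMap.congr_fun hwa z
  calc ∑ t, w t * (a t x - b t) = ∑ t, w t * (a t y - b t) := by
        simp only [mul_sub, Finset.sum_sub_distrib, hzero]
    _ ≤ 0 := Finset.sum_nonpos fun t _ =>
        mul_nonpos_of_nonneg_of_nonpos (hw t) (sub_nonpos.2 (hy t))

theorem ofReal_sum_le_inv_dualInfENorm {w : ι → ℝ} (hw : 0 ≤ w)
    (hp : ∀ z, (∑ t, w t • a t) z ≤ p z) :
    ENNReal.ofReal (∑ t, w t) ≤ (dualInfENorm p (convexHull ℝ (a '' support w)))⁻¹ := by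
  obtain hσ | hσ : 0 = ∑ t, w t ∨ 0 < ∑ t, w t :=
    (Finset.sum_nonneg fun t _ => hw t).eq_or_lt
  · simp only [← hσ, ENNReal.ofReal_zero, zero_le]
  rw [ENNReal.le_inv_iff_le_inv, ← ENNReal.ofReal_inv_of_pos hσ]
  refine (iInf₂_le _ (inv_sum_smul_sum_mem_convexHull a hw hσ)).trans
    (dualENorm_le_ofReal (inv_pos.2 hσ).le fun z => ?_)
  exact mul_le_mul_of_nonneg_left (hp z) (inv_pos.2 hσ).le

theorem exists_seminormInfEDist_le_mul (p : Seminorm ℝ E) {b : ι → ℝ}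
    (hne : (feasibleSet a b).Nonempty) (x : E) :
    ∃ J : Set ι, 0 ∉ convexHull ℝ (a '' J) ∧ seminormInfEDist p x (feasibleSet a b) ≤
      Metric.infEDist b {b' | x ∈ feasibleSet a b'} *
        (dualInfENorm p (convexHull ℝ (a '' J)))⁻¹ := by
  set d := seminormInfEDist p x (feasibleSet a b)
  by_cases hd0 : d = 0
  · exact ⟨∅, by simp, by simp [hd0]⟩
  have hdtop : d ≠ ⊤ := by
    obtain ⟨y, hy⟩ := hne
    exact ((iInf₂_le y hy).trans_lt ENNReal.ofReal_lt_top).ne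
  obtain ⟨w, hw, hwp, hdw⟩ := exists_nonneg_multipliers_of_le_seminorm hne
    (ENNReal.toReal_pos hd0 hdtop) fun y hy =>
      ENNReal.toReal_le_of_le_ofReal (apply_nonneg p _) (iInf₂_le y hy)
  obtain ⟨v, hv, hva, hwv, hv0⟩ := exists_nonneg_combination_zero_notMem_convexHull a
    (fun t => a t x - b t) (fun _ => sum_mul_residual_nonpos hne x) hw
  refine ⟨support v, hv0, ?_⟩
  calc d = ENNReal.ofReal d.toReal := (ENNReal.ofReal_toReal hdtop).symm
    _ ≤ ENNReal.ofReal (∑ t, v t * (a t x - b t)) := ENNReal.ofReal_le_ofReal (hdw.trans hwv)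
    _ ≤ ENNReal.ofReal (∑ t, v t) * Metric.infEDist b {b' | x ∈ feasibleSet a b'} :=
      ofReal_sum_mul_residual_le b x hv
    _ ≤ (dualInfENorm p (convexHull ℝ (a '' support v)))⁻¹ *
          Metric.infEDist b {b' | x ∈ feasibleSet a b'} := by
      gcongr
      exact ofReal_sum_le_inv_dualInfENorm hv (hva ▸ hwp)
    _ = _ := mul_comm _ _

theorem exists_inv_dualInfENorm_le_div (a : ι → Dual ℝ E) (p : Seminorm ℝ E) {J : Set ι}
    (hJ : 0 ∉ convexHull ℝ (a '' J)) :
    ∃ b : ι → ℝ, (feasibleSet a b).Nonempty ∧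
      (dualInfENorm p (convexHull ℝ (a '' J)))⁻¹ ≤ seminormInfEDist p 0 (feasibleSet a b) /
        Metric.infEDist b {b' | (0 : E) ∈ feasibleSet a b'} := by
  classical
  obtain ⟨y, hy⟩ := exists_forall_le_neg_one_of_zero_notMem_convexHull a J.toFinite hJ
  let b : ι → ℝ := fun t => if t ∈ J then -1 else |a t y|
  have hyb : y ∈ feasibleSet a b := fun t => by
    by_cases ht : t ∈ J
    · simpa [b, ht] using hy t ht
    · simpa [b, ht] using le_abs_self _
  have hdist : Metric.infEDist b {b' | (0 : E) ∈ feasibleSet a b'} ≤ 1 := by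
    rw [infEDist_setOf_mem_feasibleSet]
    refine iSup_le fun t => ENNReal.ofReal_le_one.2 ?_
    by_cases ht : t ∈ J
    · simp [b, ht]
    · simp only [b, ht, if_false, map_zero]
      linarith [abs_nonneg (a t y)]
  refine ⟨b, ⟨y, hyb⟩, ?_⟩
  calc (dualInfENorm p (convexHull ℝ (a '' J)))⁻¹ ≤ seminormInfEDist p 0 (feasibleSet a b) :=
        inv_dualInfENorm_le_seminormInfEDist_zero fun t ht => by simp [b, ht]
    _ = seminormInfEDist p 0 (feasibleSet a b) / 1 := (div_one _).symm
    _ ≤ _ := ENNReal.div_le_div_left hdist _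

end Duality

theorem global_hoffman_constant_finite_general {ι E : Type*} [Fintype ι] [AddCommGroup E]
    [Module ℝ E] (a : ι → Dual ℝ E) (p : Seminorm ℝ E) :
    (⨆ (b : ι → ℝ) (_ : (feasibleSet a b).Nonempty) (x : E),
      seminormInfEDist p x (feasibleSet a b) / Metric.infEDist b {b' | x ∈ feasibleSet a b'}) =
    ⨆ (J : Set ι) (_ : 0 ∉ convexHull ℝ (a '' J)),
      (dualInfENorm p (convexHull ℝ (a '' J)))⁻¹ := by
  refine le_antisymm (iSup₂_le fun b hb => iSup_le fun x => ?_) (iSup₂_le fun J hJ => ?_)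
  · obtain ⟨J, hJ, hle⟩ := exists_seminormInfEDist_le_mul p hb x
    exact (ENNReal.div_le_of_le_mul' hle).trans (le_iSup₂ (f := fun (J : Set ι)
      (_ : 0 ∉ convexHull ℝ (a '' J)) => (dualInfENorm p (convexHull ℝ (a '' J)))⁻¹) J hJ)
  · obtain ⟨b, hb, hle⟩ := exists_inv_dualInfENorm_le_div a p hJ
    exact hle.trans (le_iSup₂_of_le b hb (le_iSup (fun x : E => seminormInfEDist p x
      (feasibleSet a b) / Metric.infEDist b {b' | x ∈ feasibleSet a b'}) 0))

section DotProduct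

variable {n m : ℕ}

theorem convexHull_image_dotProductEquiv (a : Fin m → Fin n → ℝ) (J : Set (Fin m)) :
    convexHull ℝ ((fun t => dotProductEquiv ℝ (Fin n) (a t)) '' J) =
      dotProductEquiv ℝ (Fin n) '' convexHull ℝ (a '' J) := by
  rw [← image_image (dotProductEquiv ℝ (Fin n)) a J]
  exact ((dotProductEquiv ℝ (Fin n)).toLinearMap.image_convexHull _).symm

theorem dualInfENorm_image_dotProductEquiv (p : Seminorm ℝ (Fin n → ℝ)) (S : Set (Fin n → ℝ)) :
    dualInfENorm p (dotProductEquiv ℝ (Fin n) '' S) = dualDist0 p S :=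
  iInf_image

end DotProduct

/-- Theorem `TH_PVZ_const`, formula (1). For a finite system indexed by
`T = {1,…,m}` (the parameter space `ℝᵐ` carries the max norm, which is the product metric
on `Fin m → ℝ`; `ℝⁿ` carries an arbitrary norm `p`), the global Hoffman constant
`Hof F = sup_{b ∈ dom F, x ∈ ℝⁿ} d(x, F(b)) / d(b, F⁻¹(x))` satisfies
`Hof F = max { d_*(0ₙ, conv{a_t : t ∈ J})⁻¹ : J ⊆ T, 0ₙ ∉ conv{a_t : t ∈ J} }`
(conventions: `d(z,∅) = +∞`, `1/+∞ = 0`, `0/0 = 0`, `sup ∅ = 0`). -/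
theorem global_hoffman_constant_finite
    {n m : ℕ} (a : Fin m → (Fin n → ℝ))
    (p : Seminorm ℝ (Fin n → ℝ)) (hp : ∀ x, p x = 0 → x = 0) :
    (⨆ (b : Fin m → ℝ) (_ : (feas a b).Nonempty) (x : Fin n → ℝ),
        pDist p x (feas a b) / infEdist b {b' : Fin m → ℝ | x ∈ feas a b'})
    =
    ⨆ (J : Set (Fin m)) (_ : (0 : Fin n → ℝ) ∉ convexHull ℝ (a '' J)),
      (dualDist0 p (convexHull ℝ (a '' J)))⁻¹ := by
  have h := global_hoffman_constant_finite_general (fun t => dotProductEquiv ℝ (Fin n) (a t)) p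
  simp only [convexHull_image_dotProductEquiv, dualInfENorm_image_dotProductEquiv,
    mem_image, EmbeddingLike.map_eq_zero_iff, exists_eq_right] at h
  exact h
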